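/- arXiv:1706.01573 — 14 statements merged into one kernel-verified Lean document; each statement's English description precedes it below -/
import Mathlib

section
/- For every n ∈ ℕ, ∑_{k=0}^{n} \binom{n}{k}(-1)^k F_k = -F_n and ∑_{k=0}^{n} \binom{n}{k}(-1)^k L_k = L_n, where F and L are the Fibonacci and Lucas sequences. In other words, the Lucas sequence is an invariant sequence of the first kind and the Fibonacci sequence is an inverse invariant sequence of the first kind. -/
/-- The Lucas sequence: L 0 = 2, L 1 = 1, L (n+2) = L (n+1) + L n. -/
def lucas : ℕ → ℕ
  | 0 => 2
  | 1 => 1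
  | n + 2 => lucas (n + 1) + lucas n

theorem lucas_binet (n : ℕ) :
    (lucas n : ℝ) = Real.goldenRatio ^ n + Real.goldenConj ^ n := by
  induction n using Nat.twoStepInduction with
  | zero => norm_num [lucas]
  | one => simp [lucas]
  | more n h1 h2 =>
    rw [lucas]
    push_cast
    rw [h1, h2, pow_add _ n 2, pow_add _ n 2, Real.goldenRatio_sq, Real.goldenConj_sq]
    ring

theorem binom_alt (x : ℝ) (n : ℕ) :
    (∑ k ∈ Finset.range (n + 1), (Nat.choose n k : ℝ) * (-1) ^ k * x ^ k) = (1 - x) ^ n := by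
  rw [sub_eq_neg_add, add_pow]
  refine Finset.sum_congr rfl fun k _ => ?_
  rw [neg_pow x k]
  ring

/-- the Fibonacci sequence is an inverse invariant sequence of the
first kind and the Lucas sequence is an invariant sequence of the first kind. -/
theorem stmt1 (n : ℕ) :
    (∑ k ∈ Finset.range (n + 1), (Nat.choose n k : ℝ) * (-1) ^ k * (Nat.fib k : ℝ))
      = -(Nat.fib n : ℝ) ∧
    (∑ k ∈ Finset.range (n + 1), (Nat.choose n k : ℝ) * (-1) ^ k * (lucas k : ℝ))
      = (lucas n : ℝ) := by
  have h1 := binom_alt Real.goldenRatio n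
  have h2 := binom_alt Real.goldenConj n
  rw [show 1 - Real.goldenConj = Real.goldenRatio by linarith [Real.goldenRatio_add_goldenConj]] at h2
  rw [show 1 - Real.goldenRatio = Real.goldenConj by linarith [Real.goldenRatio_add_goldenConj]] at h1
  constructor
  · simp only [Real.coe_fib_eq, mul_div_assoc', mul_sub]
    rw [← Finset.sum_div, Finset.sum_sub_distrib, h1, h2]
    ring
  · simp only [lucas_binet, mul_add]
    rw [Finset.sum_add_distrib, h1, h2]
    ring
end

section
/- Let N : ℕ × ℕ → ℝ be defined by N_{00} = 1, N_{0j} = 0 and N_{i0} = 0 for i, j ≥ 1, N_{ij} = (-1)^{j-i} \binom{⌊(i-1)/2⌋ + j - i}{⌊(i-1)/2⌋} for 1 ≤ i ≤ j, and N_{ij} = 0 for i > j ≥ 1. Let M : ℕ × ℕ → ℝ be defined by M_{00} = 1, M_{0j} = 0 and M_{i0} = 0 for i, j ≥ 1, M_{ij} = \binom{⌊j/2⌋}{j-i} for 1 ≤ i ≤ j, and M_{ij} = 0 for i > j ≥ 1. Then N M = I, that is, for all i, j ∈ ℕ, ∑_{l=i}^{j} N_{il} M_{lj} equals 1 if i =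 j and 0 otherwise. -/
/-- The matrix `N` of Lemma 3.1. -/
noncomputable def Nmat (i j : ℕ) : ℝ :=
  if i = 0 ∧ j = 0 then 1
  else if i = 0 ∨ j = 0 then 0
  else if i ≤ j then (-1) ^ (j - i) * (Nat.choose ((i - 1) / 2 + (j - i)) ((i - 1) / 2) : ℝ)
  else 0

/-- The matrix `M` of Lemma 3.2. -/
noncomputable def Mmat (i j : ℕ) : ℝ :=
  if i = 0 ∧ j = 0 then 1
  else if i = 0 ∨ j = 0 then 0
  else if i ≤ j then (Nat.choose (j / 2) (j - i) : ℝ)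
  else 0

open PowerSeries in
lemma aux_conv (a c n : ℕ) :
    ∑ k ∈ Finset.range (n + 1), ((-1 : ℝ) ^ k * (Nat.choose (a + k) a : ℝ)) *
      (Nat.choose (a + 1 + c) (n - k) : ℝ) = (Nat.choose c n : ℝ) := by
  have hc : ∀ b m : ℕ, coeff m ((1 + X : PowerSeries ℝ) ^ b) = (Nat.choose b m : ℝ) := by
    intro b m
    have h : (1 + X : PowerSeries ℝ) ^ b
        = (((1 + Polynomial.X) ^ b : Polynomial ℝ) : PowerSeries ℝ) := by
      simp
    rw [h, Polynomial.coeff_coe, Polynomial.coeff_one_add_X_pow]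
  have h1 := PowerSeries.mk_add_choose_mul_one_sub_pow_eq_one ℝ a
  have h2 := congrArg (PowerSeries.rescale (-1 : ℝ)) h1
  rw [map_mul, map_pow, map_sub, map_one, PowerSeries.rescale_X] at h2
  have h3 : (1 - PowerSeries.C (-1 : ℝ) * X) = (1 + X : PowerSeries ℝ) := by simp
  rw [h3] at h2
  have h4 := congrArg (fun f => coeff n (f * (1 + X : PowerSeries ℝ) ^ c)) h2
  simp only [one_mul, mul_assoc, ← pow_add] at h4
  rw [hc, coeff_mul, Finset.Nat.sum_antidiagonal_eq_sum_range_succ_mk] at h4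
  rw [← h4]
  refine Finset.sum_congr rfl fun k _ => ?_
  rw [hc]
  simp [PowerSeries.coeff_rescale]

/-- `N M = I`. -/
theorem stmt3 (i j : ℕ) :
    (∑ l ∈ Finset.Icc i j, Nmat i l * Mmat l j) = if i = j then 1 else 0 := by
  rcases Nat.eq_zero_or_pos i with rfl | hi
  · rcases Nat.eq_zero_or_pos j with rfl | hj
    · simp [Nmat, Mmat]
    · rw [if_neg (by omega)]
      refine Finset.sum_eq_zero fun l _ => ?_
      rcases Nat.eq_zero_or_pos l with rfl | hl
      · simp [Mmat, hj.ne']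
      · simp [Nmat, hl.ne']
  rcases lt_or_ge j i with hji | hij
  · rw [Finset.Icc_eq_empty (by omega), if_neg (by omega)]; simp
  rcases eq_or_ne i j with rfl | hne
  · simp [Nmat, Mmat, hi.ne']
  rw [if_neg hne]
  obtain ⟨n, rfl⟩ := Nat.exists_eq_add_of_le hij
  obtain ⟨c, hc⟩ := Nat.exists_eq_add_of_le (show (i - 1) / 2 + 1 ≤ (i + n) / 2 by omega)
  have key := aux_conv ((i - 1) / 2) c n
  rw [Nat.choose_eq_zero_of_lt (show c < n by omega), Nat.cast_zero] at key
  rw [← key, ← Finset.Ico_add_one_right_eq_Icc, Finset.sum_Ico_eq_sum_range,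
    show i + n + 1 - i = n + 1 by omega]
  refine Finset.sum_congr rfl fun k hk => ?_
  have hk' : k ≤ n := by simpa [Nat.lt_succ_iff] using hk
  rw [← hc]
  simp only [Nmat, Mmat]
  rw [if_neg (by omega), if_neg (by omega), if_pos (by omega), if_neg (by omega),
    if_neg (by omega), if_pos (by omega), show i + k - i = k by omega,
    show i + n - (i + k) = n - k by omega]
end

section
/- Let N and M be the upper triangular infinite matrices defined by N_{00} = M_{00} = 1, N_{0j} = N_{i0} = M_{0j} = M_{i0} = 0 for i, j ≥ 1, N_{ij} = (-1)^{j-i} \binom{⌊(i-1)/2⌋ + j - i}{⌊(i-1)/2⌋} and M_{ij} = \binom{⌊j/2⌋}{j-i} for 1 ≤ i ≤ j, and N_{ij} = M_{ij} = 0 for i > j ≥ 1. Then for all i, j ∈ ℕ, the (finite) sum ∑_{l=i}^{j} ∑_{k=l}^{j} N_{il} \binom{k}{l} (-1)^k M_{kj} equals: 1 if i = j and i is even; -1 if i = j and i is odd; -1 if j = i+1 and i is even; and 0 otherwise. That is, N (PᵀD) M is the infinite direct sum of copies of the 2×2 matrix [[1,-1],[0,-1]]. -/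
theorem conv_aux (e h n : ℕ) (he : e + 1 ≤ h) :
    ∑ p ∈ Finset.HasAntidiagonal.antidiagonal n, ((-1 : ℝ) ^ p.1 * (Nat.choose (e + p.1) e : ℝ)) * (Nat.choose h p.2 : ℝ)
      = (Nat.choose (h - (e + 1)) n : ℝ) := by
  have h1 := PowerSeries.mk_add_choose_mul_one_sub_pow_eq_one (S := ℝ) e
  have h2 := congrArg (PowerSeries.rescale (-1 : ℝ)) h1
  simp only [map_mul, map_pow, map_sub, map_one, PowerSeries.rescale_neg_one_X, sub_neg_eq_add] at h2
  have h3 : (PowerSeries.rescale (-1 : ℝ) (PowerSeries.mk fun n => (Nat.choose (e + n) e : ℝ)))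
      * (1 + PowerSeries.X) ^ h = (1 + PowerSeries.X) ^ (h - (e + 1)) := by
    conv_lhs => rw [show h = (e + 1) + (h - (e + 1)) by omega, pow_add, ← mul_assoc, h2, one_mul]
  have hc : ∀ m k : ℕ, PowerSeries.coeff k ((1 + PowerSeries.X : PowerSeries ℝ) ^ m) = (Nat.choose m k : ℝ) := by
    intro m k
    have : ((1 + PowerSeries.X : PowerSeries ℝ) ^ m) = (((1 + Polynomial.X) ^ m : Polynomial ℝ) : PowerSeries ℝ) := by
      simp
    rw [this, Polynomial.coeff_coe, Polynomial.coeff_one_add_X_pow]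
  have h4 := congrArg (PowerSeries.coeff n) h3
  rw [PowerSeries.coeff_mul, hc] at h4
  simpa [PowerSeries.coeff_rescale, hc] using h4

theorem Mmat_gt {k j : ℕ} (h : j < k) : Mmat k j = 0 := by
  unfold Mmat
  split_ifs <;> first | rfl | omega

theorem Nmat_gt {k j : ℕ} (h : j < k) : Nmat k j = 0 := by
  unfold Nmat
  split_ifs <;> first | rfl | omega

theorem Mmat_le {k j : ℕ} (h : k ≤ j) : Mmat k j = (Nat.choose (j / 2) (j - k) : ℝ) := by
  unfold Mmat
  split_ifs with h1 h2
  · obtain ⟨rfl, rfl⟩ := h1; simp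
  · rw [Nat.choose_eq_zero_of_lt (by omega)]; simp
  · rfl

theorem Mmat_diag (j : ℕ) : Mmat j j = 1 := by rw [Mmat_le le_rfl]; simp

theorem NM (i j n : ℕ) (hn : j ≤ n) :
    ∑ l ∈ Finset.Icc i n, Nmat i l * Mmat l j = if i = j then 1 else 0 := by
  rcases lt_or_ge j i with hji | hij
  · rw [if_neg (by omega)]
    apply Finset.sum_eq_zero
    intro l hl
    rw [Finset.mem_Icc] at hl
    rw [Mmat_gt (by omega), mul_zero]
  have hs : ∑ l ∈ Finset.Icc i n, Nmat i l * Mmat l j = ∑ l ∈ Finset.Icc i j, Nmat i l * Mmat l j := by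
    symm
    apply Finset.sum_subset (Finset.Icc_subset_Icc le_rfl hn)
    intro l hl hl'
    rw [Finset.mem_Icc] at hl hl'
    rw [Mmat_gt (by omega), mul_zero]
  rw [hs]
  rcases Nat.eq_zero_or_pos i with rfl | hi
  · rw [Finset.sum_eq_single 0]
    · by_cases hj : j = 0
      · subst hj; simp [Nmat, Mmat]
      · simp [Nmat, Mmat, hj, Ne.symm hj]
    · intro b _ hb; simp [Nmat, hb]
    · simp
  rcases hij.eq_or_lt with rfl | hlt
  · simp [Mmat_diag, Nmat, hi.ne']
  rw [if_neg hlt.ne]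
  have := conv_aux ((i-1)/2) (j/2) (j-i) (by omega)
  rw [Nat.choose_eq_zero_of_lt (by omega), Nat.cast_zero,
    Finset.Nat.sum_antidiagonal_eq_sum_range_succ_mk] at this
  rw [← this, ← Finset.Ico_add_one_right_eq_Icc, Finset.sum_Ico_eq_sum_range,
    show j + 1 - i = (j - i).succ by omega]
  apply Finset.sum_congr rfl
  intro a ha
  rw [Finset.mem_range] at ha
  rw [Mmat_le (by omega), Nmat, if_neg (by omega), if_neg (by omega), if_pos (by omega)]
  simp only [Nat.add_sub_cancel_left, Nat.sub_add_eq]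

open Polynomial in
theorem colM (j : ℕ) : (X ^ (j - j / 2) * (1 + X) ^ (j / 2) : ℝ[X])
    = ∑ k ∈ Finset.range (j + 1), C (Mmat k j) * X ^ k := by
  ext l
  simp only [finsetSum_coeff, coeff_C_mul, coeff_X_pow, mul_ite, mul_one, mul_zero,
    Finset.sum_ite_eq, Finset.mem_range]
  rw [mul_comm, coeff_mul_X_pow', coeff_one_add_X_pow]
  split_ifs with h1 h2 h2
  · rw [Mmat_le (by omega), ← Nat.choose_symm (by omega)]
    congr 2; omega
  · rw [Nat.choose_eq_zero_of_lt (by omega)]; simp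
  · rw [Mmat_le (by omega), Nat.choose_eq_zero_of_lt (by omega)]; simp
  · rfl

open Polynomial in
theorem colM_coeff (j l : ℕ) : (X ^ (j - j / 2) * (1 + X) ^ (j / 2) : ℝ[X]).coeff l = Mmat l j := by
  rw [colM]
  simp only [finsetSum_coeff, coeff_C_mul, coeff_X_pow, mul_ite, mul_one, mul_zero,
    Finset.sum_ite_eq, Finset.mem_range]
  split_ifs with h
  · rfl
  · rw [Mmat_gt (by omega)]

open Polynomial in
theorem PM (l j : ℕ) : ∑ k ∈ Finset.Icc l j, ((Nat.choose k l : ℝ) * (-1) ^ k) * Mmat k j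
    = ((-1) ^ j * (X ^ (j / 2) * (1 + X) ^ (j - j / 2)) : ℝ[X]).coeff l := by
  have h := congrArg (fun p : ℝ[X] => p.comp (-(1 + X))) (colM j)
  simp only [mul_comp, pow_comp, X_comp, add_comp, one_comp, Polynomial.sum_comp, C_comp] at h
  have h2 : (-(1 + X)) ^ (j - j / 2) * (1 + -(1 + X)) ^ (j / 2)
     = ((-1) ^ j * (X ^ (j / 2) * (1 + X) ^ (j - j / 2)) : ℝ[X]) := by
    rw [show (1 + -(1 + X) : ℝ[X]) = -X by ring, neg_pow, neg_pow (X : ℝ[X])]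
    conv_rhs => rw [show (-1 : ℝ[X]) ^ j = (-1) ^ (j - j/2) * (-1) ^ (j / 2) by
      rw [← pow_add]; congr 1; omega]
    ring
  rw [← h2, h, finsetSum_coeff]
  have hs : Finset.Icc l j ⊆ Finset.range (j + 1) := by
    intro x hx; rw [Finset.mem_Icc] at hx; rw [Finset.mem_range]; omega
  have ht : ∀ k, (C (Mmat k j) * (-(1 + X)) ^ k : ℝ[X]).coeff l
      = ((Nat.choose k l : ℝ) * (-1) ^ k) * Mmat k j := by
    intro k
    rw [coeff_C_mul, neg_pow, show (-1 : ℝ[X]) ^ k = C ((-1) ^ k) by simp, coeff_C_mul,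
      coeff_one_add_X_pow]
    ring
  simp only [ht]
  apply Finset.sum_subset hs
  intro k hk hk'
  rw [Finset.mem_range] at hk
  rw [Finset.mem_Icc] at hk'
  rw [Nat.choose_eq_zero_of_lt (by omega)]; simp

open Polynomial in
theorem PM_even (l h : ℕ) : ∑ k ∈ Finset.Icc l (2 * h), ((Nat.choose k l : ℝ) * (-1) ^ k) * Mmat k (2 * h)
    = Mmat l (2 * h) := by
  rw [PM, ← colM_coeff, show 2 * h / 2 = h by omega, show 2 * h - h = h by omega]
  simp

open Polynomial in
theorem PM_odd (l h : ℕ) :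
    ∑ k ∈ Finset.Icc l (2 * h + 1), ((Nat.choose k l : ℝ) * (-1) ^ k) * Mmat k (2 * h + 1)
    = - Mmat l (2 * h) - Mmat l (2 * h + 1) := by
  rw [PM, ← colM_coeff, ← colM_coeff, show 2 * h / 2 = h by omega, show 2 * h - h = h by omega,
    show (2 * h + 1) / 2 = h by omega, show 2 * h + 1 - h = h + 1 by omega, ← coeff_neg, ← coeff_sub]
  congr 1
  rw [pow_succ (-1), pow_mul]
  ring

/-- `N (Pᵀ D) M` is the infinite direct sum of copies of `[[1,-1],[0,-1]]`. -/
theorem stmt4 (i j : ℕ) :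
    (∑ l ∈ Finset.Icc i j, ∑ k ∈ Finset.Icc l j,
        Nmat i l * ((Nat.choose k l : ℝ) * (-1) ^ k) * Mmat k j)
      = if i = j then (if Even i then 1 else -1)
        else if j = i + 1 ∧ Even i then -1 else 0 := by
  have e1 : (∑ l ∈ Finset.Icc i j, ∑ k ∈ Finset.Icc l j,
        Nmat i l * ((Nat.choose k l : ℝ) * (-1) ^ k) * Mmat k j)
      = ∑ l ∈ Finset.Icc i j, Nmat i l * ∑ k ∈ Finset.Icc l j,
        ((Nat.choose k l : ℝ) * (-1) ^ k) * Mmat k j := by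
    simp only [Finset.mul_sum, mul_assoc]
  rw [e1]
  rcases Nat.even_or_odd' j with ⟨h, rfl | rfl⟩
  · simp only [PM_even]
    rw [NM _ _ _ le_rfl]
    by_cases hi : i = 2 * h
    · simp [hi]
    · rw [if_neg hi, if_neg hi, if_neg]
      rintro ⟨h1, h2⟩
      rw [Nat.even_iff] at h2; omega
  · simp only [PM_odd, mul_sub, mul_neg, Finset.sum_sub_distrib, Finset.sum_neg_distrib]
    rw [NM _ _ _ le_rfl, NM _ _ _ (Nat.le_succ _)]
    simp only [Nat.even_iff]
    split_ifs <;> first | omega | norm_num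
end

section
/- Let N and M be the upper triangular infinite matrices defined by N_{00} = M_{00} = 1, N_{0j} = N_{i0} = M_{0j} = M_{i0} = 0 for i, j ≥ 1, N_{ij} = (-1)^{j-i} \binom{⌊(i-1)/2⌋ + j - i}{⌊(i-1)/2⌋} and M_{ij} = \binom{⌊j/2⌋}{j-i} for 1 ≤ i ≤ j, and N_{ij} = M_{ij} = 0 for i > j ≥ 1. Then for all i, j ∈ ℕ, the (finite) sum ∑_{l=j}^{i} ∑_{k=j}^{l} (-1)^{i+l} M_{li} · \binom{l}{k}(-1)^k · (-1)^{k+j} N_{jk} equals: 1 if i = j and i is even; 1 if i = j+1 and j is even; -1 if i = j and i is odd; and 0 otherwise. That is, (D Mᵀ D)(P D)(D Nᵀ D) is the infinite direct sum of copies of the 2×2 matrix [[1,0],[1,-1]]. -/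
open Finset in
lemma G_aux (m k p : ℕ) : ∑ u ∈ range (m+1), (-1:ℝ)^(m-u) * (m.choose u : ℝ) * ((p+u).choose k : ℝ)
    = if m ≤ k then (p.choose (k-m) : ℝ) else 0 := by
  have h := fwdDiff_iter_eq_sum_shift (1:ℕ) (fun x ↦ (x.choose k : ℤ)) m p
  have h2 : (fwdDiff (1:ℕ))^[m] (fun x ↦ (x.choose k : ℤ)) p
      = if m ≤ k then (p.choose (k-m) : ℤ) else 0 := by
    split_ifs with hk
    · obtain ⟨d, rfl⟩ := Nat.exists_eq_add_of_le hk
      rw [fwdDiff_iter_choose]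
      simp
    · obtain ⟨d, rfl⟩ := Nat.exists_eq_add_of_lt (not_le.mp hk)
      have h0 := fwdDiff_iter_choose 0 k
      simp only [add_zero, Nat.choose_zero_right] at h0
      rw [show k + d + 1 = d + 1 + k by ring, Function.iterate_add_apply, h0,
        fwdDiff_iter_eq_sum_shift]
      simp only [smul_eq_mul]
      have := Int.alternating_sum_range_choose_of_ne (n := d+1) (by omega)
      rw [← sum_range_reflect] at this
      simp only [Nat.cast_one, mul_one]
      rw [← this]
      refine sum_congr rfl fun u hu => ?_
      have hu' : u ≤ d+1 := by simp at hu; omega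
      rw [show d + 1 + 1 - 1 - u = d + 1 - u by omega, Nat.choose_symm hu']
  rw [h2] at h
  have h3 := congrArg (fun z : ℤ => (z:ℝ)) h
  simp only [smul_eq_mul, mul_one] at h3
  push_cast at h3
  rw [h3]

open Finset in
lemma A_aux (m i k : ℕ) (h : m ≤ i) :
    ∑ l ∈ range (i+1), (-1:ℝ)^(i+l) * (m.choose (i-l) : ℝ) * (l.choose k : ℝ)
    = if m ≤ k then ((i-m).choose (k-m) : ℝ) else 0 := by
  obtain ⟨p, rfl⟩ := Nat.exists_eq_add_of_le' h
  rw [show p + m + 1 = p + (m+1) by ring, sum_range_add, sum_eq_zero, zero_add,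
    Nat.add_sub_cancel, ← G_aux]
  · refine sum_congr rfl fun u hu => ?_
    have hu' : u ≤ m := by simp at hu; omega
    rw [show p + m - (p+u) = m - u by omega, Nat.choose_symm hu',
      show p + m + (p + u) = 2*(p+u) + (m-u) by omega, pow_add, pow_mul]
    simp
  · intro l hl
    have : l < p := by simpa using hl
    rw [Nat.choose_eq_zero_of_lt (by omega : m < p + m - l)]
    simp

lemma M_eq (i l : ℕ) (hi : 1 ≤ i) (hl : l ≤ i) : Mmat l i = ((i/2).choose (i-l) : ℝ) := by
  unfold Mmat
  rw [if_neg (by omega)]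
  rcases Nat.eq_zero_or_pos l with rfl | h
  · rw [if_pos (by simp), Nat.choose_eq_zero_of_lt (by omega)]; simp
  · rw [if_neg (by omega), if_pos hl]

lemma N_zero (j k : ℕ) (h : k < j) : Nmat j k = 0 := by
  unfold Nmat
  rw [if_neg (by omega)]
  split_ifs
  · rfl
  · omega
  · rfl

lemma N_eq (j x t m : ℕ) (hj : 1 ≤ j) (hm : 1 ≤ m) (hx : x + j = (j-1)/2 + m) :
    Nmat j (m+t) = (-1)^(m+t+j) * ((x+t).choose ((j-1)/2) : ℝ) := by
  by_cases h : j ≤ m + t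
  · unfold Nmat
    rw [if_neg (by omega), if_neg (by omega), if_pos h,
      show (j-1)/2 + (m+t-j) = x + t by omega,
      show m + t + j = 2 * j + (m+t-j) by omega, pow_add, pow_mul]
    simp
  · rw [N_zero _ _ (by omega), Nat.choose_eq_zero_of_lt (by omega)]
    simp

lemma N_diag (j : ℕ) : Nmat j j = 1 := by
  unfold Nmat
  split_ifs <;> first | rfl | omega | simp

open Finset in
lemma main_zero (i j : ℕ) (h : j + 2 ≤ i) :
    (∑ l ∈ Finset.Icc j i, ∑ k ∈ Finset.Icc j l,
        (-1 : ℝ) ^ (i + l) * Mmat l i * ((Nat.choose l k : ℝ) * (-1) ^ k) *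
          ((-1 : ℝ) ^ (k + j) * Nmat j k)) = 0 := by
  have e1 : (∑ l ∈ Finset.Icc j i, ∑ k ∈ Finset.Icc j l,
        (-1 : ℝ) ^ (i + l) * Mmat l i * ((Nat.choose l k : ℝ) * (-1) ^ k) *
          ((-1 : ℝ) ^ (k + j) * Nmat j k))
      = ∑ l ∈ range (i+1), ∑ k ∈ range (i+1),
        (-1 : ℝ) ^ (i + l) * ((i/2).choose (i-l) : ℝ) * (Nat.choose l k : ℝ) *
          ((-1 : ℝ) ^ j * Nmat j k) := by
    have inner : ∀ l ∈ range (i+1), ∑ k ∈ Finset.Icc j l,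
        (-1 : ℝ) ^ (i + l) * Mmat l i * ((Nat.choose l k : ℝ) * (-1) ^ k) *
          ((-1 : ℝ) ^ (k + j) * Nmat j k) = ∑ k ∈ range (i+1),
        (-1 : ℝ) ^ (i + l) * ((i/2).choose (i-l) : ℝ) * (Nat.choose l k : ℝ) *
          ((-1 : ℝ) ^ j * Nmat j k) := by
      intro l hl
      have hl' : l ≤ i := by simp at hl; omega
      refine Eq.trans ?_ (sum_subset (s₁ := Finset.Icc j l) ?_ ?_)
      · refine sum_congr rfl fun k hk => ?_
        rw [M_eq i l (by omega) hl', pow_add (-1:ℝ) k j]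
        have : ((-1:ℝ)^k) * (-1)^k = 1 := by rw [← mul_pow]; simp
        linear_combination ((-1 : ℝ) ^ (i + l) * ((i/2).choose (i-l) : ℝ) * (Nat.choose l k : ℝ) *
          ((-1 : ℝ) ^ j * Nmat j k)) * this
      · intro k hk
        simp at hk ⊢; omega
      · intro k hk hk2
        simp only [Finset.mem_Icc, not_and_or, not_le] at hk2
        rcases hk2 with h2 | h2
        · rw [N_zero _ _ h2]; simp
        · rw [Nat.choose_eq_zero_of_lt h2]; simp
    rw [← sum_congr rfl inner]
    refine sum_subset ?_ ?_
    · intro l hl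
      simp at hl ⊢; omega
    · intro l hl hl2
      have : l < j := by simp at hl hl2; omega
      rw [Finset.Icc_eq_empty (by omega)]; simp
  rw [e1, sum_comm]
  simp_rw [← sum_mul]
  simp_rw [A_aux (i/2) i _ (by omega)]
  obtain ⟨n, hn⟩ : ∃ n, i = i/2 + n := ⟨i - i/2, by omega⟩
  set m := i/2 with hm
  rw [show i + 1 = m + (n+1) by omega, sum_range_add, sum_eq_zero, zero_add]
  swap
  · intro k hk
    rw [if_neg (by simp at hk; omega)]; simp
  rcases Nat.eq_zero_or_pos j with rfl | hj
  · refine sum_eq_zero fun t ht => ?_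
    have : Nmat 0 (m+t) = 0 := by
      unfold Nmat
      rw [if_neg (by omega), if_pos (by simp)]
    rw [this]; simp
  · have g := G_aux n ((j-1)/2) ((j-1)/2 + m - j)
    rw [if_neg (by omega)] at g
    have g2 := congrArg (fun z => (-1:ℝ)^(m+n) * z) g
    simp only [mul_zero, mul_sum] at g2
    rw [← g2]
    refine sum_congr rfl fun t ht => ?_
    have ht' : t ≤ n := by simp at ht; omega
    rw [if_pos (by omega), N_eq j ((j-1)/2 + m - j) t m hj (by omega) (by omega),
      show i - m = n by omega, show m + t - m = t by omega]
    have s : (-1:ℝ)^j * (-1)^(m+t+j) = (-1)^(m+n) * (-1)^(n-t) := by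
      rw [← pow_add, ← pow_add]
      rw [show j + (m+t+j) = 2*j + (m+t) by ring, show m + n + (n-t) = 2*(n-t) + (m+t) by omega,
        pow_add, pow_mul, pow_add _ (2*(n-t)), pow_mul]
      simp
    linear_combination ((n.choose t : ℝ) * (((j-1)/2 + m - j + t).choose ((j-1)/2) : ℝ)) * s

/-- `(D Mᵀ D)(P D)(D Nᵀ D)` is the infinite direct sum of copies of
`[[1,0],[1,-1]]`. -/
theorem stmt5 (i j : ℕ) :
    (∑ l ∈ Finset.Icc j i, ∑ k ∈ Finset.Icc j l,
        (-1 : ℝ) ^ (i + l) * Mmat l i * ((Nat.choose l k : ℝ) * (-1) ^ k) *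
          ((-1 : ℝ) ^ (k + j) * Nmat j k))
      = if i = j then (if Even i then 1 else -1)
        else if i = j + 1 ∧ Even j then 1 else 0 := by
  rcases lt_trichotomy i j with h | rfl | h
  · rw [Finset.Icc_eq_empty (by omega), if_neg (by omega), if_neg (by omega)]; simp
  · have hM : Mmat i i = 1 := by
      unfold Mmat
      split_ifs <;> first | rfl | omega | simp
    simp only [Finset.Icc_self, Finset.sum_singleton, N_diag, hM, if_true]
    rcases Nat.even_or_odd i with he | he
    · simp [he, he.neg_one_pow, he.add he]
    · simp [he.neg_one_pow, Nat.not_even_iff_odd.mpr he, he.add_odd he]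
  · rcases Nat.lt_or_ge i (j+2) with h2 | h2
    · obtain rfl : i = j + 1 := by omega
      rw [if_neg (by omega), Finset.sum_Icc_succ_top (by omega), Finset.sum_Icc_succ_top (by omega)]
      simp only [Finset.Icc_self, Finset.sum_singleton, N_diag]
      rw [M_eq _ _ (by omega) (by omega), M_eq _ _ (by omega) (by omega)]
      rcases Nat.eq_zero_or_pos j with rfl | hj
      · simp [Nmat]
      · have hN : Nmat j (j+1) = -(((j-1)/2 + 1 : ℕ) : ℝ) := by
          unfold Nmat
          rw [if_neg (by omega), if_neg (by omega), if_pos (by omega)]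
          simp
        rw [hN]
        rcases Nat.even_or_odd j with he | he
        · obtain ⟨a, rfl⟩ := he
          rw [show (a+a+1)/2 = a by omega, show (a+a-1)/2+1 = a by omega]
          simp [pow_add, ← mul_pow]
          ring
        · have hne := Nat.not_even_iff_odd.mpr he
          obtain ⟨a, rfl⟩ := he
          rw [show (2*a+1+1)/2 = a+1 by omega, show (2*a+1-1)/2+1 = a+1 by omega]
          simp [pow_add, pow_mul]
          ring
    · rw [main_zero i j h2, if_neg (by omega), if_neg (by omega)]
end

section
/- Let y : ℕ → ℝ be a finitely supported sequence. Then ∑_{k=n}^∞ \binom{k}{n}(-1)^k y_k = y_n holds for every n if and only if there exists a finitely supported sequence b : ℕ → ℝ such that y_n = ∑_{j} b_j \binom{j}{n-j} for every n (the inner sum is finite, running over ⌈n/2⌉ ≤ j ≤ n). In other words, the finitely supported invariant sequences of the second kind are exactly the finite linear combinations of the columns of the matrix P^{T↓}, whose j-th column has entries \binom{j}{n-j}. -/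
open Polynomial in
theorem aux_poly (y : ℕ → ℝ) (hy : (Function.support y).Finite) :
    ∃ Y : ℝ[X], ∀ n, Y.coeff n = y n := by
  refine ⟨∑ k ∈ hy.toFinset, monomial k (y k), fun n => ?_⟩
  simp only [finset_sum_coeff, coeff_monomial, Finset.sum_ite_eq', Set.Finite.mem_toFinset,
    Function.mem_support]
  split_ifs with h
  · rfl
  · push Not at h
    exact h.symm

open Polynomial in
theorem aux_coeff1 (Y : ℝ[X]) (n : ℕ) :
    (Y.comp (-1 - X)).coeff n = ∑ᶠ k, (Nat.choose k n : ℝ) * (-1) ^ k * Y.coeff k := by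
  rw [finsum_eq_sum_of_support_subset (s := Y.support)]
  · rw [comp, eval₂_eq_sum, Polynomial.sum, finset_sum_coeff]
    refine Finset.sum_congr rfl fun k _ => ?_
    have : (-1 - X : ℝ[X]) ^ k = C ((-1) ^ k) * (X + 1) ^ k := by
      rw [C_pow, ← mul_pow]; congr 1; simp; ring
    rw [this, coeff_C_mul, coeff_C_mul, coeff_X_add_one_pow]
    ring
  · intro k hk
    simp only [Function.mem_support] at hk
    simp only [Finset.mem_coe, mem_support_iff]
    exact right_ne_zero_of_mul hk

open Polynomial in
theorem aux_coeff2 (B : ℝ[X]) (n : ℕ) :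
    (B.comp (X * (X + 1))).coeff n =
      ∑ j ∈ Finset.range (n + 1), B.coeff j * (Nat.choose j (n - j) : ℝ) := by
  have h : ∀ j, (C (B.coeff j) * (X * (X + 1)) ^ j).coeff n =
      if j ∈ Finset.range (n + 1) then B.coeff j * (Nat.choose j (n - j) : ℝ) else 0 := by
    intro j
    rw [coeff_C_mul, mul_pow, coeff_X_pow_mul', coeff_X_add_one_pow]
    simp [Nat.lt_succ_iff]
  rw [comp, eval₂_eq_sum, Polynomial.sum, finset_sum_coeff, Finset.sum_congr rfl fun j _ => h j,
    ← Finset.sum_filter, Finset.filter_mem_eq_inter, Finset.inter_comm]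
  refine Finset.sum_subset Finset.inter_subset_left fun j hj hj' => ?_
  have : B.coeff j = 0 := by
    by_contra hne
    exact hj' (Finset.mem_inter.2 ⟨hj, mem_support_iff.2 hne⟩)
  simp [this]

open Polynomial in
theorem aux_inv (d : ℕ) : ∀ Y : ℝ[X], Y.natDegree ≤ d → Y.comp (-1 - X) = Y →
    ∃ B : ℝ[X], Y = B.comp (X * (X + 1)) := by
  induction d with
  | zero =>
    intro Y hd _
    refine ⟨C (Y.coeff 0), ?_⟩
    rw [C_comp]
    exact eq_C_of_natDegree_le_zero hd
  | succ d ih =>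
    intro Y hd hY
    have h0 : (X : ℝ[X]) ∣ Y - C (Y.eval 0) := by
      rw [X_dvd_iff]; simp [coeff_zero_eq_eval_zero]
    have hev : Y.eval (-1) = Y.eval 0 := by
      conv_rhs => rw [← hY]
      simp [eval_comp]
    have h1 : (X + 1 : ℝ[X]) ∣ Y - C (Y.eval 0) := by
      have : (X + 1 : ℝ[X]) = X - C (-1) := by simp
      rw [this, dvd_iff_isRoot]; simp [hev]
    have hc : IsCoprime (X : ℝ[X]) (X + 1) := ⟨-1, 1, by ring⟩
    obtain ⟨Z, hZ⟩ := hc.mul_dvd h0 h1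
    have hq : (X * (X + 1) : ℝ[X]) ≠ 0 := by
      exact mul_ne_zero X_ne_zero (by simpa using X_add_C_ne_zero (1 : ℝ))
    have hZi : Z.comp (-1 - X) = Z := by
      apply mul_left_cancel₀ hq
      have := congrArg (fun p => p.comp (-1 - X)) hZ
      simp only [sub_comp, mul_comp, C_comp, hY, X_comp, add_comp, one_comp] at this
      rw [← hZ, this]; ring
    have hZd : Z.natDegree ≤ d := by
      by_cases hz : Z = 0
      · simp [hz]
      have h2 : (X * (X + 1) : ℝ[X]).natDegree = 2 := by
        rw [natDegree_mul X_ne_zero (by simpa using X_add_C_ne_zero (1 : ℝ)), natDegree_X]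
        have := natDegree_X_add_C (1 : ℝ)
        simp at this
        rw [this]
      have := congrArg natDegree hZ
      rw [natDegree_mul hq hz, h2, natDegree_sub_C] at this
      omega
    obtain ⟨B, hB⟩ := ih Z hZd hZi
    refine ⟨X * B + C (Y.eval 0), ?_⟩
    rw [add_comp, mul_comp, X_comp, C_comp, ← hB, ← hZ]; ring

/-- the finitely supported invariant sequences of the second kind are
exactly the finite linear combinations of the columns of `P^{T↓}`, whose `j`-th
column has entries `choose j (n - j)` (which vanish unless `⌈n/2⌉ ≤ j ≤ n`). -/
theorem stmt6 (y : ℕ → ℝ) (hy : (Function.support y).Finite) :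
    (∀ n, ∑ᶠ k, (Nat.choose k n : ℝ) * (-1) ^ k * y k = y n) ↔
    (∃ b : ℕ → ℝ, (Function.support b).Finite ∧
      ∀ n, y n = ∑ j ∈ Finset.range (n + 1), b j * (Nat.choose j (n - j) : ℝ)) := by
  obtain ⟨Y, hY⟩ := aux_poly y hy
  obtain rfl : Y.coeff = y := funext hY
  simp only [← aux_coeff1]
  constructor
  · intro h
    obtain ⟨B, hB⟩ := aux_inv _ Y le_rfl (Polynomial.ext h)
    refine ⟨B.coeff, ?_, fun n => ?_⟩
    · refine B.support.finite_toSet.subset fun k hk => ?_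
      simpa using hk
    · rw [← aux_coeff2, ← hB]
  · rintro ⟨b, hb, h⟩ n
    obtain ⟨B, hB⟩ := aux_poly b hb
    obtain rfl : B.coeff = b := funext hB
    simp only [← aux_coeff2] at h
    rw [Polynomial.ext h, Polynomial.comp_assoc]
    congr 2
    simp only [Polynomial.mul_comp, Polynomial.X_comp, Polynomial.add_comp, Polynomial.one_comp]
    ring
end

section
/- Let x : ℕ → ℝ. Then ∑_{k=0}^{n} \binom{n}{k}(-1)^k x_k = -x_n holds for every n if and only if there exists a sequence c : ℕ → ℝ such that for every n, x_n = ∑_{j=0}^{⌊(n-1)/2⌋} c_j \binom{n-j-1}{j} (a finite sum; for n = 0 the empty sum, so x_0 = 0). In other words, the inverse invariant sequences of the first kind are exactly the (entrywise well-defined) linear combinations of the columns of the matrix [0ᵀ; P↓], whose j-th column has entries \binom{n-j-1}{j}. -/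
open Finset in
theorem B_succ (x : ℕ → ℝ) (n : ℕ) :
    ∑ k ∈ range (n + 2), (Nat.choose (n+1) k : ℝ) * (-1) ^ k * x k =
    ∑ k ∈ range (n + 1), (Nat.choose n k : ℝ) * (-1) ^ k * x k -
    ∑ k ∈ range (n + 1), (Nat.choose n k : ℝ) * (-1) ^ k * x (k+1) := by
  have h : ∑ k ∈ range (n + 1), (Nat.choose n k : ℝ) * (-1) ^ k * x k =
      ∑ k ∈ range (n + 2), (Nat.choose n k : ℝ) * (-1) ^ k * x k := by
    rw [sum_range_succ _ (n+1)]; simp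
  rw [h, sum_range_succ', sum_range_succ' _ (n+1)]
  have : ∀ k, ((Nat.choose (n+1) (k+1) : ℕ) : ℝ) * (-1) ^ (k+1) * x (k+1) =
     (Nat.choose n (k+1) : ℝ) * (-1) ^ (k+1) * x (k+1) - (Nat.choose n k : ℝ) * (-1) ^ k * x (k+1) := by
    intro k
    rw [Nat.choose_succ_succ]; push_cast; ring
  simp only [this, sum_sub_distrib]
  simp
  ring

/-- the binomial transform -/
noncomputable def BT (x : ℕ → ℝ) (n : ℕ) : ℝ :=
  ∑ k ∈ Finset.range (n + 1), (Nat.choose n k : ℝ) * (-1) ^ k * x k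

/-- the operator commuting with the transform -/
noncomputable def TT (x : ℕ → ℝ) (n : ℕ) : ℝ := x (n+2) - x (n+1)

/-- combination of columns -/
noncomputable def CC (c : ℕ → ℝ) (n : ℕ) : ℝ :=
  ∑ j ∈ Finset.range ((n + 1) / 2), c j * (Nat.choose (n - j - 1) j : ℝ)

theorem BT_rec (x : ℕ → ℝ) (n : ℕ) : BT x (n+2) = BT x (n+1) + BT (TT x) n := by
  have h1 : BT x (n+2) = BT x (n+1) - BT (fun k => x (k+1)) (n+1) := B_succ x (n+1)
  have h2 : BT (fun k => x (k+1)) (n+1) =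
    BT (fun k => x (k+1)) n - BT (fun k => x (k+2)) n := B_succ (fun k => x (k+1)) n
  have h3 : BT (TT x) n = BT (fun k => x (k+2)) n - BT (fun k => x (k+1)) n := by
    simp only [BT, TT, mul_sub, Finset.sum_sub_distrib]
  rw [h1, h2, h3]; ring

open Finset in
theorem CC_rec (c : ℕ → ℝ) (n : ℕ) :
    CC c (n+2) = CC c (n+1) + CC (fun j => c (j+1)) n := by
  have h : CC c (n+1) = ∑ j ∈ range ((n + 1) / 2 + 1), c j * (Nat.choose (n - j) j : ℝ) := by
    have e : CC c (n+1) = ∑ j ∈ range ((n + 2) / 2), c j * (Nat.choose (n - j) j : ℝ) := by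
      unfold CC
      refine sum_congr rfl fun j hj => ?_
      rw [show n + 1 - j - 1 = n - j by omega]
    rw [e]
    apply sum_subset
    · intro j; simp only [mem_range]; omega
    · intro j h1 h2
      simp only [mem_range] at h1 h2
      rw [Nat.choose_eq_zero_of_lt (by omega)]; simp
  rw [h, sum_range_succ']
  unfold CC
  rw [show (n + 2 + 1) / 2 = (n+1)/2 + 1 by omega, sum_range_succ', add_right_comm,
    ← sum_add_distrib]
  congr 1
  · refine sum_congr rfl fun j hj => ?_
    simp only [mem_range] at hj
    rw [show n + 2 - (j+1) - 1 = (n - j - 1) + 1 by omega, Nat.choose_succ_succ,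
      show n - (j+1) = n - j - 1 by omega]
    push_cast; ring
  · simp

theorem CC_inv (n : ℕ) : ∀ c, BT (CC c) n = - CC c n := by
  induction n using Nat.strong_induction_on with
  | _ n ih =>
    intro c
    match n with
    | 0 => simp [BT, CC]
    | 1 => simp [BT, CC, Finset.sum_range_succ]
    | n+2 =>
      have : TT (CC c) = CC (fun j => c (j+1)) := by
        funext k; simp only [TT, CC_rec]; ring
      rw [BT_rec, ih (n+1) (by omega), this, ih n (by omega), CC_rec]; ring

theorem TT_inv (x : ℕ → ℝ) (h : ∀ n, BT x n = - x n) : ∀ n, BT (TT x) n = - TT x n := by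
  intro n
  have := BT_rec x n
  rw [h, h] at this
  simp only [TT] at *
  linarith

theorem inv_CC (n : ℕ) : ∀ x, (∀ n, BT x n = - x n) → x n = CC (fun j => (TT^[j] x) 1) n := by
  induction n using Nat.strong_induction_on with
  | _ n ih =>
    intro x hx
    match n with
    | 0 => have := hx 0; simp [BT, CC] at *; linarith
    | 1 => simp [CC]
    | n+2 =>
      have h1 := ih n (by omega) (TT x) (TT_inv x hx)
      have h2 := ih (n+1) (by omega) x hx
      rw [CC_rec, ← h2]
      simp only [Function.iterate_succ_apply]
      rw [← h1]; simp [TT]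

/-- the inverse invariant sequences of the first kind are exactly the
linear combinations of the columns of `[0ᵀ; P↓]`, whose `j`-th column has entries
`choose (n - j - 1) j`; the sum runs over `0 ≤ j ≤ ⌊(n-1)/2⌋`, i.e. `j < (n+1)/2`. -/
theorem stmt8 (x : ℕ → ℝ) :
    (∀ n, ∑ k ∈ Finset.range (n + 1), (Nat.choose n k : ℝ) * (-1) ^ k * x k = -x n) ↔
    (∃ c : ℕ → ℝ, ∀ n, x n =
      ∑ j ∈ Finset.range ((n + 1) / 2), c j * (Nat.choose (n - j - 1) j : ℝ)) := by
  
  constructor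
  · intro h
    exact ⟨_, fun n => inv_CC n x h⟩
  · rintro ⟨c, hc⟩ n
    have : x = CC c := funext hc
    rw [this]
    exact CC_inv n c
end

section
/- Let x : ℕ → ℝ be such that for every n ∈ ℕ the series ∑_{k=n}^∞ \binom{k}{n}(-1)^k x_k converges with sum x_n (in the sense of HasSum for the family k ↦ \binom{n+k}{n}(-1)^{n+k} x_{n+k}). Define y : ℕ → ℝ by y_0 = x_0 and y_n = x_n + 2 x_{n-1} for n ≥ 1. Then for every n ∈ ℕ the series ∑_{k=n}^∞ \binom{k}{n}(-1)^k y_k converges with sum -y_n. -/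
theorem shift_aux (z : ℕ → ℝ) (n : ℕ) (s : ℝ) :
    HasSum (fun k => (Nat.choose (n + k) n : ℝ) * (-1) ^ (n + k) * z (n + k)) s ↔
    HasSum (fun k => (Nat.choose k n : ℝ) * (-1) ^ k * z k) s := by
  refine Function.Injective.hasSum_iff (f := fun k => (Nat.choose k n : ℝ) * (-1) ^ k * z k)
    (add_right_injective n) ?_
  intro k hk
  have : k < n := by
    by_contra h
    exact hk ⟨k - n, by omega⟩
  simp [Nat.choose_eq_zero_of_lt this]

/-- if `x` is an invariant sequence of the second kind (in the `HasSum`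
sense), then `y = (J(1) + J(0))ᵀ x`, i.e. `y 0 = x 0`, `y (n+1) = x (n+1) + 2 x n`,
is an inverse invariant sequence of the second kind. -/
theorem stmt10 (x : ℕ → ℝ)
    (hx : ∀ n, HasSum (fun k => (Nat.choose (n + k) n : ℝ) * (-1) ^ (n + k) * x (n + k)) (x n))
    (y : ℕ → ℝ) (hy0 : y 0 = x 0) (hy : ∀ n, y (n + 1) = x (n + 1) + 2 * x n) :
    ∀ n, HasSum (fun k => (Nat.choose (n + k) n : ℝ) * (-1) ^ (n + k) * y (n + k)) (-y n) := by
  simp only [shift_aux] at hx ⊢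
  intro n
  rw [← hasSum_nat_add_iff' 1]
  have h1 := (hasSum_nat_add_iff' 1).2 (hx n)
  cases n with
  | zero =>
    have h2 := h1.sub ((hx 0).mul_left 2)
    convert h2 using 1
    · funext k
      rw [hy]; simp; ring
    · simp [hy0]; ring
  | succ m =>
    have h2 := h1.sub (((hx (m + 1)).add (hx m)).mul_left 2)
    convert h2 using 1
    · funext k
      rw [hy, Nat.choose_succ_succ]; push_cast; ring
    · simp [hy]; ring
end

section
/- Let x : ℕ → ℝ be a finitely supported sequence such that ∑_{k=n}^∞ \binom{k}{n}(-1)^k x_k = -x_n for every n (the sums are finite by finite support). Define y : ℕ → ℝ by y_n = ∑_{t=0}^∞ (-1)^t (1/2)^{t+1} x_{n+1+t} (a finite sum). Then y is finitely supported and ∑_{k=n}^∞ \binom{k}{n}(-1)^k y_k = y_n for every n. -/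
open Polynomial in
lemma aux_coeff (a : ℕ → ℝ) (N : ℕ) (h : ∀ k, N ≤ k → a k = 0) (n : ℕ) :
    (∑ k ∈ Finset.range N, C (a k) * X ^ k : ℝ[X]).coeff n = a n := by
  simp only [finsetSum_coeff, coeff_C_mul, coeff_X_pow, mul_ite, mul_one, mul_zero,
    Finset.sum_ite_eq, Finset.mem_range]
  split_ifs with h1
  · rfl
  · exact (h n (by omega)).symm

open Polynomial in
lemma aux_comp (a : ℕ → ℝ) (N : ℕ) (h : ∀ k, N ≤ k → a k = 0) (n : ℕ) :
    ((∑ k ∈ Finset.range N, C (a k) * X ^ k : ℝ[X]).comp (-(1 + X))).coeff n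
      = ∑ᶠ k, (Nat.choose k n : ℝ) * (-1) ^ k * a k := by
  rw [finsum_eq_sum_of_support_subset (s := Finset.range N)]
  · simp only [Polynomial.sum_comp, mul_comp, C_comp, X_pow_comp, finsetSum_coeff, coeff_C_mul]
    refine Finset.sum_congr rfl fun k _ => ?_
    have : (-(1 + X) : ℝ[X]) ^ k = C ((-1) ^ k) * (1 + X) ^ k := by
      rw [neg_pow]; simp
    rw [this, coeff_C_mul, coeff_one_add_X_pow]
    ring
  · intro k hk
    by_contra hc
    simp only [Finset.coe_range, Set.mem_Iio, not_lt] at hc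
    exact hk (by simp [h k hc])

open Polynomial in
/-- if `x` is a finitely supported inverse invariant sequence of the
second kind, then `y = J(2)⁻¹ J(0) x`, i.e. `y n = ∑ t, (-1)^t (1/2)^(t+1) x (n+1+t)`
(a finite sum), is finitely supported and is an invariant sequence of the second kind. -/
theorem stmt11 (x : ℕ → ℝ) (hx : (Function.support x).Finite)
    (hinv : ∀ n, ∑ᶠ k, (Nat.choose k n : ℝ) * (-1) ^ k * x k = -x n)
    (y : ℕ → ℝ)
    (hy : ∀ n, y n = ∑ᶠ t, (-1 : ℝ) ^ t * (1 / 2) ^ (t + 1) * x (n + 1 + t)) :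
    (Function.support y).Finite ∧
    (∀ n, ∑ᶠ k, (Nat.choose k n : ℝ) * (-1) ^ k * y k = y n) := by
  obtain ⟨N, hN⟩ : ∃ N, ∀ k, N ≤ k → x k = 0 := by
    obtain ⟨M, hM⟩ := hx.bddAbove
    refine ⟨M + 1, fun k hk => ?_⟩
    by_contra hc
    have := hM (Function.mem_support.2 hc)
    omega
  have hys : ∀ n M, N ≤ M →
      y n = ∑ t ∈ Finset.range M, (-1 : ℝ) ^ t * (1 / 2) ^ (t + 1) * x (n + 1 + t) := by
    intro n M hM
    rw [hy, finsum_eq_sum_of_support_subset]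
    intro k hk
    by_contra hc
    simp only [Finset.coe_range, Set.mem_Iio, not_lt] at hc
    exact hk (by simp [hN (n + 1 + k) (by omega)])
  have hyN : ∀ k, N ≤ k → y k = 0 := by
    intro k hk
    rw [hys k N le_rfl]
    exact Finset.sum_eq_zero fun t _ => by rw [hN (k + 1 + t) (by omega), mul_zero]
  have hrec : ∀ n, 2 * y n + y (n + 1) = x (n + 1) := by
    intro n
    rw [hys n (N + 1) (by omega), hys (n + 1) N le_rfl, Finset.sum_range_succ', mul_add,
      Finset.mul_sum, add_right_comm, ← Finset.sum_add_distrib, Finset.sum_eq_zero]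
    · simp
    · intro t _
      rw [show n + 1 + 1 + t = n + 1 + (t + 1) by ring]
      ring
  refine ⟨(Set.finite_Iio N).subset fun k hk => ?_, fun n => ?_⟩
  · by_contra hc
    exact hk (hyN k (by simpa using hc))
  have hXc := aux_coeff x N hN
  have hXm := aux_comp x N hN
  have hYc := aux_coeff y N hyN
  rw [← aux_comp y N hyN, ← hYc n]
  generalize (∑ k ∈ Finset.range N, C (x k) * X ^ k : ℝ[X]) = P at *
  generalize (∑ k ∈ Finset.range N, C (y k) * X ^ k : ℝ[X]) = Q at *
  have hP : P.comp (-(1 + X)) = -P := by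
    ext m
    rw [hXm, hinv, coeff_neg, hXc]
  have hQ : (C 2 * X + 1) * Q = P + C (y 0 - x 0) := by
    ext m
    rw [add_mul, one_mul, mul_assoc, coeff_add, coeff_add, coeff_C_mul, hYc, hXc]
    cases m with
    | zero => simp
    | succ m => rw [coeff_X_mul, hYc, hrec, coeff_C_succ, add_zero]
  have hP0 : P.eval (-1/2) = 0 := by
    have := congrArg (eval (-1/2)) hP
    rw [eval_comp] at this
    simp only [eval_neg, eval_add, eval_one, eval_X] at this
    norm_num at this
    norm_num
    linarith
  have h0 : y 0 - x 0 = 0 := by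
    have := congrArg (eval (-1/2)) hQ
    simp only [eval_mul, eval_add, eval_C, eval_X, eval_one, hP0] at this
    norm_num at this
    linarith
  rw [h0, C_0, add_zero] at hQ
  have hne : (C 2 * X + 1 : ℝ[X]) ≠ 0 := by
    intro h
    have := congrArg (eval 0) h
    simp at this
  have hQ2 : Q.comp (-(1 + X)) = Q := by
    apply mul_left_cancel₀ hne
    have := congrArg (fun p => p.comp (-(1 + X))) hQ
    simp only [mul_comp, add_comp, C_comp, X_comp, one_comp, hP] at this
    rw [hQ, ← neg_inj, ← this]
    have h2 : (C 2 : ℝ[X]) = 2 := rfl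
    rw [h2]; ring
  rw [hQ2]
end

section
/- Let x : ℕ → ℝ satisfy ∑_{k=0}^{n} \binom{n}{k}(-1)^k x_k = x_n for every n. Define y : ℕ → ℝ by y_0 = 0 and y_n = ∑_{k=0}^{n-1} (1/2)^{n-k} x_k for n ≥ 1. Then ∑_{k=0}^{n} \binom{n}{k}(-1)^k y_k = -y_n for every n. -/
theorem pascal_sum (f : ℕ → ℝ) (n : ℕ) :
    ∑ k ∈ Finset.range (n + 2), (Nat.choose (n + 1) k : ℝ) * f k
      = ∑ k ∈ Finset.range (n + 1), (Nat.choose n k : ℝ) * f k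
        + ∑ k ∈ Finset.range (n + 1), (Nat.choose n k : ℝ) * f (k + 1) := by
  have h := Finset.sum_range_succ (fun k => (Nat.choose n k : ℝ) * f k) (n + 1)
  have h' := Finset.sum_range_succ' (fun k => (Nat.choose n k : ℝ) * f k) (n + 1)
  rw [Finset.sum_range_succ']
  simp only [Nat.choose_succ_succ, Nat.cast_add, add_mul, Finset.sum_add_distrib]
  simp at h h' ⊢
  linarith

/-- if `x` is an invariant sequence of the first kind, then
`y = (-J(0) J(-2)⁻¹)ᵀ x`, i.e. `y 0 = 0`, `y n = ∑_{k<n} (1/2)^(n-k) x k` for `n ≥ 1`,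
is an inverse invariant sequence of the first kind. -/
theorem stmt12 (x : ℕ → ℝ)
    (hx : ∀ n, ∑ k ∈ Finset.range (n + 1), (Nat.choose n k : ℝ) * (-1) ^ k * x k = x n)
    (y : ℕ → ℝ) (hy0 : y 0 = 0)
    (hy : ∀ n, 1 ≤ n → y n = ∑ k ∈ Finset.range n, (1 / 2 : ℝ) ^ (n - k) * x k) :
    ∀ n, ∑ k ∈ Finset.range (n + 1), (Nat.choose n k : ℝ) * (-1) ^ k * y k = -y n := by
  have hy' : ∀ n, y n = ∑ k ∈ Finset.range n, (1 / 2 : ℝ) ^ (n - k) * x k := by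
    intro n
    rcases Nat.eq_zero_or_pos n with rfl | h
    · simp [hy0]
    · exact hy n h
  have hr : ∀ n, y (n + 1) = (y n + x n) / 2 := by
    intro n
    rw [hy' (n + 1), hy' n, Finset.sum_range_succ, add_div, Finset.sum_div]
    congr 1
    · apply Finset.sum_congr rfl
      intro k hk
      have hk' := Finset.mem_range.mp hk
      rw [show n + 1 - k = (n - k) + 1 by omega, pow_succ]
      ring
    · simp
      ring
  intro n
  induction n with
  | zero => simp [hy0]
  | succ n ih =>
    have hp := pascal_sum (fun k => (-1) ^ k * y k) n
    simp only [← mul_assoc] at hp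
    have h2 : ∑ k ∈ Finset.range (n + 1), (Nat.choose n k : ℝ) * (-1) ^ (k + 1) * y (k + 1)
        = -(∑ k ∈ Finset.range (n + 1), (Nat.choose n k : ℝ) * (-1) ^ k * y k
          + ∑ k ∈ Finset.range (n + 1), (Nat.choose n k : ℝ) * (-1) ^ k * x k) / 2 := by
      rw [← Finset.sum_add_distrib, ← Finset.sum_neg_distrib, Finset.sum_div]
      apply Finset.sum_congr rfl
      intro k _
      rw [hr k]
      ring
    rw [hp, h2, ih, hx n, hr n]
    ring
end

section
/- Let x : ℕ → ℝ satisfy ∑_{k=0}^{n} \binom{n}{k}(-1)^k x_k = -x_n for every n. Define y : ℕ → ℝ by y_n = 2 x_{n+1} - x_n. Then ∑_{k=0}^{n} \binom{n}{k}(-1)^k y_k = y_n for every n. -/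
/-- if `x` is an inverse invariant sequence of the first kind, then
`y = (J(-1) + J(0)) x`, i.e. `y n = 2 x (n+1) - x n`, is an invariant sequence of
the first kind. -/
theorem stmt13 (x : ℕ → ℝ)
    (hx : ∀ n, ∑ k ∈ Finset.range (n + 1), (Nat.choose n k : ℝ) * (-1) ^ k * x k = -x n)
    (y : ℕ → ℝ) (hy : ∀ n, y n = 2 * x (n + 1) - x n) :
    ∀ n, ∑ k ∈ Finset.range (n + 1), (Nat.choose n k : ℝ) * (-1) ^ k * y k = y n := by
  intro n
  have h1 := hx (n + 1)
  have h0 := hx n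
  have e : ∑ k ∈ Finset.range (n + 1 + 1), (Nat.choose n k : ℝ) * (-1) ^ k * x k = -x n := by
    rw [Finset.sum_range_succ, h0, Nat.choose_succ_self]
    simp
  rw [Finset.sum_range_succ'] at h1 e
  have key : ∑ k ∈ Finset.range (n + 1), (Nat.choose n k : ℝ) * (-1) ^ k * y k
      = 2 * (∑ k ∈ Finset.range (n + 1), (Nat.choose n (k + 1) : ℝ) * (-1) ^ (k + 1) * x (k + 1))
      - 2 * (∑ k ∈ Finset.range (n + 1), (Nat.choose (n + 1) (k + 1) : ℝ) * (-1) ^ (k + 1) * x (k + 1))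
      - ∑ k ∈ Finset.range (n + 1), (Nat.choose n k : ℝ) * (-1) ^ k * x k := by
    rw [Finset.mul_sum, Finset.mul_sum, ← Finset.sum_sub_distrib, ← Finset.sum_sub_distrib]
    refine Finset.sum_congr rfl fun k _ => ?_
    rw [hy, Nat.choose_succ_succ]
    push_cast
    ring
  rw [key, h0, hy]
  simp only [Nat.choose_zero_right] at h1 e
  linarith
end

section
/- Let B_k denote the Bernoulli numbers (with convention B_1 = -1/2). Define K : ℕ → ℝ by K_0 = 0 and K_n = ∑_{k=0}^{n-1} (1/2)^{n-k} (-1)^k B_k for n ≥ 1. Then ∑_{k=0}^{n} \binom{n}{k}(-1)^k K_k = -K_n for every n, i.e., K is an inverse invariant sequence of the first kind. -/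
theorem aux_b (n : ℕ) : ∑ k ∈ Finset.range (n + 1), (Nat.choose n k : ℝ) * (bernoulli k : ℝ)
    = (-1) ^ n * (bernoulli n : ℝ) := by
  have h : ∑ k ∈ Finset.range (n + 1), (Nat.choose n k : ℚ) * bernoulli k
      = (-1) ^ n * bernoulli n := by
    rw [Finset.sum_range_succ, sum_bernoulli]
    by_cases hn : n = 1
    · subst hn; norm_num
    · rw [← bernoulli'_eq_bernoulli, ← bernoulli_eq_bernoulli'_of_ne_one hn]
      simp [hn]
  exact_mod_cast h

/-- the sequence `K` built from the Bernoulli numbers (convention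
`B 1 = -1/2`, Mathlib's `bernoulli`) via `K 0 = 0`,
`K n = ∑_{k<n} (1/2)^(n-k) (-1)^k B k`, is an inverse invariant sequence of the
first kind. -/
theorem stmt14 (K : ℕ → ℝ) (hK0 : K 0 = 0)
    (hK : ∀ n, 1 ≤ n →
      K n = ∑ k ∈ Finset.range n, (1 / 2 : ℝ) ^ (n - k) * (-1) ^ k * (bernoulli k : ℝ)) :
    ∀ n, ∑ k ∈ Finset.range (n + 1), (Nat.choose n k : ℝ) * (-1) ^ k * K k = -K n := by
  have hK' : ∀ n, K n = ∑ k ∈ Finset.range n,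
      (1 / 2 : ℝ) ^ (n - k) * (-1) ^ k * (bernoulli k : ℝ) := by
    intro n
    rcases Nat.eq_zero_or_pos n with rfl | h
    · simp [hK0]
    · exact hK n h
  have hrec : ∀ n, K (n + 1) = (K n + (-1) ^ n * (bernoulli n : ℝ)) / 2 := by
    intro n
    rw [hK' (n + 1), hK' n, Finset.sum_range_succ, add_div, Finset.sum_div]
    congr 1
    · refine Finset.sum_congr rfl fun k hk => ?_
      have hk := Finset.mem_range.1 hk
      rw [show n + 1 - k = (n - k) + 1 by omega, pow_succ]
      ring
    · rw [show n + 1 - n = 1 by omega]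
      ring
  intro n
  induction n with
  | zero => simp [hK0]
  | succ n ih =>
    have h := Finset.sum_choose_succ_mul (fun k _ => (-1 : ℝ) ^ k * K k) n
    simp only [← mul_assoc] at h
    rw [h, ih]
    have h2 : ∑ k ∈ Finset.range (n + 1), (Nat.choose n k : ℝ) * (-1) ^ (k + 1) * K (k + 1)
        = -((∑ k ∈ Finset.range (n + 1), (Nat.choose n k : ℝ) * (-1) ^ k * K k) +
          ∑ k ∈ Finset.range (n + 1), (Nat.choose n k : ℝ) * (bernoulli k : ℝ)) / 2 := by
      rw [← Finset.sum_add_distrib, ← Finset.sum_neg_distrib, Finset.sum_div]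
      refine Finset.sum_congr rfl fun k _ => ?_
      have e : (-1 : ℝ) ^ k * (-1) ^ k = 1 := by rw [← mul_pow]; simp
      rw [hrec, pow_succ]
      linear_combination (-(Nat.choose n k : ℝ) * (bernoulli k : ℝ) / 2) * e
    rw [h2, ih, aux_b, hrec]
    ring
end

section
/- Define operators on sequences ℕ → ℝ by: (S₁ x)_n = ∑_{j} \binom{j}{n-j} x_j (a finite sum over ⌈n/2⌉ ≤ j ≤ n), and (S₋₁ x)_0 = x_0, (S₋₁ x)_n = x_n + 2 x_{n-1} for n ≥ 1. Let x : ℕ → ℝ be finitely supported and, for a positive integer m, let z = S_{l_m} ∘ S_{l_{m-1}} ∘ ⋯ ∘ S_{l_1} applied to x, where l_i = (-1)^{i+1} (so the first operator applied is S₁ and the operators alternate). Then z is finitely supported, and: if m is odd, ∑_{k=n}^∞ \binom{k}{n}(-1)^k z_k = z_n for every n; if m is even, ∑_{k=n}^∞ \binom{k}{n}(-1)^k z_k = -z_n for every n. -/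
/-- Multiplication by the matrix `P^{T↓}`: `(S1 x) n = ∑_j choose j (n-j) * x j`
(the terms vanish unless `⌈n/2⌉ ≤ j ≤ n`). -/
noncomputable def S1 (x : ℕ → ℝ) (n : ℕ) : ℝ :=
  ∑ j ∈ Finset.range (n + 1), (Nat.choose j (n - j) : ℝ) * x j

/-- Multiplication by `(J(1) + J(0))ᵀ`. -/
noncomputable def Sneg1 (x : ℕ → ℝ) : ℕ → ℝ
  | 0 => x 0
  | n + 1 => x (n + 1) + 2 * x n

/-- `applyS m x = S_{l_m} ∘ ⋯ ∘ S_{l_1} x` where `l_i = (-1)^(i+1)`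
(so `S1` is applied first and the operators alternate). -/
noncomputable def applyS : ℕ → (ℕ → ℝ) → (ℕ → ℝ)
  | 0, x => x
  | m + 1, x => (if (m + 1) % 2 = 1 then S1 else Sneg1) (applyS m x)

open Polynomial in
theorem S1_coeff (p : ℝ[X]) : S1 p.coeff = (p.comp (X * (X + 1))).coeff := by
  induction p using Polynomial.induction_on' with
  | add p q hp hq =>
    funext n
    rw [add_comp, coeff_add, ← hp, ← hq]
    simp only [S1, coeff_add, mul_add, Finset.sum_add_distrib]
  | monomial j a =>
    funext n
    rw [← C_mul_X_pow_eq_monomial, mul_comp, C_comp, X_pow_comp, mul_pow, coeff_C_mul,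
      coeff_X_pow_mul']
    simp only [S1, coeff_C_mul, coeff_X_pow, coeff_X_add_one_pow]
    by_cases h : j ≤ n
    · rw [Finset.sum_eq_single j]
      · simp [h, mul_comm]
      · intro b _ hb
        simp [hb]
      · intro hj
        exact absurd (Finset.mem_range.2 (by omega)) hj
    · rw [Finset.sum_eq_zero]
      · simp [h]
      · intro b hb
        have := Finset.mem_range.1 hb
        have hb : b ≠ j := by omega
        simp [hb]

open Polynomial in
theorem Sneg1_coeff (p : ℝ[X]) : Sneg1 p.coeff = ((1 + C 2 * X) * p).coeff := by
  funext n
  cases n with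
  | zero => simp [Sneg1, add_mul, mul_assoc]
  | succ n => simp [Sneg1, add_mul, mul_assoc, coeff_X_mul]

open Polynomial in
theorem finsum_coeff (p : ℝ[X]) (n : ℕ) :
    ∑ᶠ k, (Nat.choose k n : ℝ) * (-1) ^ k * p.coeff k = (p.comp (-(X + 1))).coeff n := by
  rw [finsum_eq_sum_of_support_subset (s := p.support), comp, eval₂_eq_sum, Polynomial.sum,
    finset_sum_coeff]
  · refine Finset.sum_congr rfl fun k _ => ?_
    have : (-(X + 1) : ℝ[X]) ^ k = C ((-1) ^ k) * (X + 1) ^ k := by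
      rw [neg_pow]; simp
    rw [this, coeff_C_mul, coeff_C_mul, coeff_X_add_one_pow]
    ring
  · intro k hk
    have := right_ne_zero_of_mul (Function.mem_support.1 hk)
    simpa using this

theorem exists_poly (x : ℕ → ℝ) (hx : (Function.support x).Finite) :
    ∃ p : Polynomial ℝ, p.coeff = x := by
  refine ⟨⟨AddMonoidAlgebra.ofCoeff (Finsupp.ofSupportFinite x hx)⟩, ?_⟩
  rfl

open Polynomial in
theorem applyS_poly (p : ℝ[X]) (m : ℕ) : ∃ q : ℝ[X], applyS m p.coeff = q.coeff ∧
    (Odd m → q.comp (-(X + 1)) = q) ∧ (Even m → 1 ≤ m → q.comp (-(X + 1)) = -q) := by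
  induction m with
  | zero => exact ⟨p, rfl, by simp, by simp⟩
  | succ m ih =>
    obtain ⟨q, hq, ho, -⟩ := ih
    rcases Nat.even_or_odd m with h | h
    · refine ⟨q.comp (X * (X + 1)), ?_, fun _ => ?_, fun h' => ?_⟩
      · rw [applyS, if_pos (by have := Nat.even_iff.1 h; omega), hq, S1_coeff]
      · rw [comp_assoc]
        congr 1
        simp
        ring
      · exact absurd h (Nat.even_add_one.1 h')
    · refine ⟨(1 + C 2 * X) * q, ?_, fun h' => ?_, fun _ _ => ?_⟩
      · rw [applyS, if_neg (by have := Nat.odd_iff.1 h; omega), hq, Sneg1_coeff]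
      · exact absurd h (Nat.odd_add_one.1 h')
      · rw [mul_comp, ho h]
        have h2 : (C 2 : ℝ[X]) = 2 := rfl
        rw [h2]
        simp
        ring

/-- for finitely supported `x` and `m ≥ 1`, `z = applyS m x` is
finitely supported; it is an invariant sequence of the second kind when `m` is odd
and an inverse invariant sequence of the second kind when `m` is even. -/
theorem stmt15 (x : ℕ → ℝ) (hx : (Function.support x).Finite) (m : ℕ) (hm : 1 ≤ m) :
    (Function.support (applyS m x)).Finite ∧
    (Odd m → ∀ n, ∑ᶠ k, (Nat.choose k n : ℝ) * (-1) ^ k * applyS m x k = applyS m x n) ∧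
    (Even m → ∀ n, ∑ᶠ k, (Nat.choose k n : ℝ) * (-1) ^ k * applyS m x k = -applyS m x n) := by
  obtain ⟨p, rfl⟩ := exists_poly x hx
  obtain ⟨q, hq, ho, he⟩ := applyS_poly p m
  rw [hq]
  refine ⟨?_, fun h n => ?_, fun h n => ?_⟩
  · refine q.support.finite_toSet.subset fun k hk => ?_
    simpa using hk
  · rw [finsum_coeff, ho h]
  · rw [finsum_coeff, he h hm, Polynomial.coeff_neg]
end

section
/- Let ε ∈ {1, -1}. Suppose x : ℕ → ℝ satisfies ∑_{k=0}^{n} \binom{n}{k}(-1)^k x_k = ε x_n for every n, and y : ℕ → ℝ is finitely supported and satisfies ∑_{k=n}^∞ \binom{k}{n}(-1)^k y_k = -ε y_n for every n (these sums are finite by finite support). Then ∑_{k} (-1)^k x_k y_k = 0 (a finite sum). In particular, an invariant sequence of the first kind and a finitely supported inverse invariant sequence of the second kind are D-orthogonal, and likewise an inverse invariant sequence of the first kind and a finitely supported invariant sequence of the second kind. -/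
/-- an (inverse) invariant sequence of the first kind and a finitely
supported (inverse, resp.) invariant sequence of the second kind with opposite signs
are `D`-orthogonal: `∑ k, (-1)^k x k * y k = 0` (a finite sum by finite support of `y`). -/
theorem stmt17 (ε : ℝ) (hε : ε = 1 ∨ ε = -1) (x y : ℕ → ℝ)
    (hx : ∀ n, ∑ k ∈ Finset.range (n + 1), (Nat.choose n k : ℝ) * (-1) ^ k * x k = ε * x n)
    (hy : (Function.support y).Finite)
    (hyinv : ∀ n, ∑ᶠ k, (Nat.choose k n : ℝ) * (-1) ^ k * y k = -ε * y n) :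
    ∑ᶠ k, (-1 : ℝ) ^ k * x k * y k = 0 := by
  obtain ⟨M, hM⟩ := hy.bddAbove
  have hN : ∀ k, M + 1 ≤ k → y k = 0 := by
    intro k hk
    by_contra h
    have : k ≤ M := hM h
    omega
  have fs : ∀ f : ℕ → ℝ, ∑ᶠ k, f k * y k = ∑ k ∈ Finset.range (M + 1), f k * y k := by
    intro f
    apply finsum_eq_sum_of_support_subset
    intro k hk
    rw [Finset.mem_coe, Finset.mem_range]
    by_contra h
    exact hk (by simp [hN k (by omega)])
  have hx2 : ∀ n ∈ Finset.range (M + 1),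
      ∑ k ∈ Finset.range (M + 1), (Nat.choose n k : ℝ) * (-1) ^ k * x k = ε * x n := by
    intro n hn
    rw [← hx n]
    symm
    apply Finset.sum_subset
    · intro k hk
      simp only [Finset.mem_range] at *
      omega
    · intro k _ hk
      rw [Finset.mem_range] at hk
      rw [Nat.choose_eq_zero_of_lt (by omega)]
      simp
  rw [fs]
  have h1 : ε * ∑ k ∈ Finset.range (M + 1), (-1 : ℝ) ^ k * x k * y k
      = -ε * ∑ k ∈ Finset.range (M + 1), (-1 : ℝ) ^ k * x k * y k := by
    calc _ = ∑ n ∈ Finset.range (M + 1), ∑ k ∈ Finset.range (M + 1),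
          (-1 : ℝ) ^ n * y n * ((Nat.choose n k : ℝ) * (-1) ^ k * x k) := by
          rw [Finset.mul_sum]
          refine Finset.sum_congr rfl fun n hn => ?_
          rw [← Finset.mul_sum, hx2 n hn]
          ring
      _ = ∑ k ∈ Finset.range (M + 1), ∑ n ∈ Finset.range (M + 1),
          (-1 : ℝ) ^ n * y n * ((Nat.choose n k : ℝ) * (-1) ^ k * x k) := Finset.sum_comm
      _ = _ := by
          rw [Finset.mul_sum]
          refine Finset.sum_congr rfl fun k _ => ?_
          have h := hyinv k
          rw [fs] at h
          calc _ = (-1 : ℝ) ^ k * x k * ∑ n ∈ Finset.range (M + 1),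
                (Nat.choose n k : ℝ) * (-1) ^ n * y n := by
                rw [Finset.mul_sum]
                exact Finset.sum_congr rfl fun n _ => by ring
            _ = _ := by rw [h]; ring
  rcases hε with rfl | rfl <;> linarith
end

section
/- Let P be the infinite Pascal matrix, P_{ij} = \binom{i}{j}, and D the diagonal matrix with D_{ii} = (-1)^i. Define powers of the lower triangular matrices P ± D entrywise by ((P±D)^{n+1})_{ij} = ∑_{k=j}^{i} ((P±D)^n)_{ik} (P±D)_{kj}, and powers of the upper triangular matrices Pᵀ ± D by ((Pᵀ±D)^{n+1})_{ij} = ∑_{k=i}^{j} ((Pᵀ±D)^n)_{ik} (Pᵀ±D)_{kj}. Then for every positive integer n and all i, j ∈ ℕ: (a) ∑_{k=j}^{i} \binom{i}{k}(-1)^k ((P+D)^n)_{kj} = ((P+D)^n)_{ij} and ∑_{k=j}^{i} \binom{i}{k}(-1)^k ((P-D)^n)_{kj} = -((P-D)^n)_{ij}; (b) ∑_{k=i}^{j} \binom{k}{i}(-1)^k ((Pᵀ+D)^n)_{kj} = ((Pᵀ+D)^n)_{ij} and ∑_{k=i}^{j} \binom{k}{i}(-1)^k ((Pᵀ-D)^n)_{kj}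 = -((Pᵀ-D)^n)_{ij}. That is, the columns of (P+D)^n are invariant and the columns of (P-D)^n are inverse invariant sequences of the first kind, and the columns of (Pᵀ+D)^n are invariant and the columns of (Pᵀ-D)^n are inverse invariant sequences of the second kind. -/
/-- The lower triangular matrix `P + D`. -/
noncomputable def Ppl (i j : ℕ) : ℝ :=
  (Nat.choose i j : ℝ) + (if i = j then (-1 : ℝ) ^ i else 0)

/-- The lower triangular matrix `P - D`. -/
noncomputable def Pmi (i j : ℕ) : ℝ :=
  (Nat.choose i j : ℝ) - (if i = j then (-1 : ℝ) ^ i else 0)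

/-- The upper triangular matrix `Pᵀ + D`. -/
noncomputable def PTpl (i j : ℕ) : ℝ :=
  (Nat.choose j i : ℝ) + (if i = j then (-1 : ℝ) ^ i else 0)

/-- The upper triangular matrix `Pᵀ - D`. -/
noncomputable def PTmi (i j : ℕ) : ℝ :=
  (Nat.choose j i : ℝ) - (if i = j then (-1 : ℝ) ^ i else 0)

/-- Entrywise powers of a lower triangular infinite matrix. -/
noncomputable def lowPow (X : ℕ → ℕ → ℝ) : ℕ → ℕ → ℕ → ℝ
  | 0 => fun i j => if i = j then 1 else 0
  | n + 1 => fun i j => ∑ k ∈ Finset.Icc j i, lowPow X n i k * X k j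

/-- Entrywise powers of an upper triangular infinite matrix. -/
noncomputable def upPow (X : ℕ → ℕ → ℝ) : ℕ → ℕ → ℕ → ℝ
  | 0 => fun i j => if i = j then 1 else 0
  | n + 1 => fun i j => ∑ k ∈ Finset.Icc i j, upPow X n i k * X k j

theorem alt_key (i j : ℕ) (h : j ≤ i) :
    ∑ k ∈ Finset.Icc j i, (Nat.choose i k : ℝ) * (-1) ^ k * (Nat.choose k j : ℝ)
      = if i = j then (-1 : ℝ) ^ i else 0 := by
  obtain ⟨m, rfl⟩ := Nat.exists_eq_add_of_le h
  have e : ∑ k ∈ Finset.Icc j (j + m),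
      (Nat.choose (j + m) k : ℝ) * (-1) ^ k * (Nat.choose k j : ℝ)
      = ∑ t ∈ Finset.range (m + 1), (Nat.choose (j + m) j : ℝ) * (-1) ^ j *
        ((-1) ^ t * (Nat.choose m t : ℝ)) := by
    rw [← Finset.Ico_add_one_right_eq_Icc, Finset.sum_Ico_eq_sum_range]
    have : j + m + 1 - j = m + 1 := by omega
    rw [this]
    apply Finset.sum_congr rfl
    intro t ht
    have ht' : t ≤ m := by
      have := Finset.mem_range.1 ht
      omega
    have hc := Nat.choose_mul (n := j + m) (k := j + t) (s := j) (by omega)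
    have h1 : j + m - j = m := by omega
    have h2 : j + t - j = t := by omega
    rw [h1, h2] at hc
    have hc' : ((j + m).choose (j + t) : ℝ) * ((j + t).choose j : ℝ)
        = ((j + m).choose j : ℝ) * (m.choose t : ℝ) := by exact_mod_cast hc
    rw [pow_add]
    linear_combination ((-1 : ℝ) ^ j * (-1) ^ t) * hc'
  have a : ∑ t ∈ Finset.range (m + 1), ((-1 : ℝ) ^ t * (Nat.choose m t : ℝ))
      = if m = 0 then 1 else 0 := by
    exact_mod_cast Int.alternating_sum_range_choose (n := m)
  rw [e, ← Finset.mul_sum, a]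
  by_cases hm : m = 0
  · subst hm; simp
  · simp [hm]

theorem low_gen (A X : ℕ → ℕ → ℝ) (c : ℝ)
    (hb : ∀ i j, j ≤ i → ∑ k ∈ Finset.Icc j i, A i k * X k j = c * X i j) (n : ℕ) :
    ∀ i j, ∑ k ∈ Finset.Icc j i, A i k * lowPow X (n + 1) k j
      = c * lowPow X (n + 1) i j := by
  induction n with
  | zero =>
    have h1 : ∀ i j, j ≤ i → lowPow X (0 + 1) i j = X i j := by
      intro i j h
      simp [lowPow, h]
    intro i j
    by_cases h : j ≤ i
    · rw [h1 i j h, ← hb i j h]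
      apply Finset.sum_congr rfl
      intro k hk
      rw [h1 k j (Finset.mem_Icc.1 hk).1]
    · have : Finset.Icc j i = ∅ := Finset.Icc_eq_empty h
      simp [lowPow, this]
  | succ n ih =>
    intro i j
    have h1 : ∀ i j, lowPow X (n + 1 + 1) i j
        = ∑ k ∈ Finset.Icc j i, lowPow X (n + 1) i k * X k j := fun _ _ => rfl
    simp only [h1, Finset.mul_sum]
    rw [Finset.sum_comm' (t' := Finset.Icc j i) (s' := fun l => Finset.Icc l i)
      (by intro x y; simp only [Finset.mem_Icc]; omega)]
    apply Finset.sum_congr rfl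
    intro l _
    rw [← mul_assoc, ← ih i l, Finset.sum_mul]
    simp only [mul_assoc]

theorem up_gen (A X : ℕ → ℕ → ℝ) (c : ℝ)
    (hb : ∀ i j, i ≤ j → ∑ k ∈ Finset.Icc i j, A i k * X k j = c * X i j) (n : ℕ) :
    ∀ i j, ∑ k ∈ Finset.Icc i j, A i k * upPow X (n + 1) k j
      = c * upPow X (n + 1) i j := by
  induction n with
  | zero =>
    have h1 : ∀ i j, i ≤ j → upPow X (0 + 1) i j = X i j := by
      intro i j h
      simp [upPow, h]
    intro i j
    by_cases h : i ≤ j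
    · rw [h1 i j h, ← hb i j h]
      apply Finset.sum_congr rfl
      intro k hk
      rw [h1 k j (Finset.mem_Icc.1 hk).2]
    · have : Finset.Icc i j = ∅ := Finset.Icc_eq_empty h
      simp [upPow, this]
  | succ n ih =>
    intro i j
    have h1 : ∀ i j, upPow X (n + 1 + 1) i j
        = ∑ k ∈ Finset.Icc i j, upPow X (n + 1) i k * X k j := fun _ _ => rfl
    simp only [h1, Finset.mul_sum]
    rw [Finset.sum_comm' (t' := Finset.Icc i j) (s' := fun l => Finset.Icc i l)
      (by intro x y; simp only [Finset.mem_Icc]; omega)]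
    apply Finset.sum_congr rfl
    intro l _
    rw [← mul_assoc, ← ih i l, Finset.sum_mul]
    simp only [mul_assoc]

theorem sq_sgn (j : ℕ) : (-1 : ℝ) ^ j * (-1) ^ j = 1 := by
  rw [← mul_pow]; simp

theorem low_diag (i j : ℕ) (h : j ≤ i) :
    ∑ k ∈ Finset.Icc j i, (Nat.choose i k : ℝ) * (-1) ^ k *
      (if k = j then (-1 : ℝ) ^ k else 0) = (Nat.choose i j : ℝ) := by
  simp [h, mul_assoc, sq_sgn]

theorem up_diag (i j : ℕ) (h : i ≤ j) :
    ∑ k ∈ Finset.Icc i j, (Nat.choose k i : ℝ) * (-1) ^ k *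
      (if k = j then (-1 : ℝ) ^ k else 0) = (Nat.choose j i : ℝ) := by
  simp [h, mul_assoc, sq_sgn]

theorem up_key (i j : ℕ) (h : i ≤ j) :
    ∑ k ∈ Finset.Icc i j, (Nat.choose k i : ℝ) * (-1) ^ k * (Nat.choose j k : ℝ)
      = if i = j then (-1 : ℝ) ^ i else 0 := by
  have := alt_key j i h
  have e : (if i = j then (-1 : ℝ) ^ i else 0) = if j = i then (-1 : ℝ) ^ j else 0 := by
    by_cases hh : i = j
    · subst hh; rfl
    · rw [if_neg hh, if_neg (Ne.symm hh)]
  rw [e, ← this]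
  apply Finset.sum_congr rfl
  intro k _
  ring

/-- for `n ≥ 1`, the columns of `(P+D)^n` are invariant and the
columns of `(P-D)^n` are inverse invariant sequences of the first kind, and the
columns of `(Pᵀ+D)^n` are invariant and the columns of `(Pᵀ-D)^n` are inverse
invariant sequences of the second kind. -/
theorem stmt18 (n : ℕ) (hn : 1 ≤ n) (i j : ℕ) :
    (∑ k ∈ Finset.Icc j i, (Nat.choose i k : ℝ) * (-1) ^ k * lowPow Ppl n k j
      = lowPow Ppl n i j) ∧
    (∑ k ∈ Finset.Icc j i, (Nat.choose i k : ℝ) * (-1) ^ k * lowPow Pmi n k j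
      = -lowPow Pmi n i j) ∧
    (∑ k ∈ Finset.Icc i j, (Nat.choose k i : ℝ) * (-1) ^ k * upPow PTpl n k j
      = upPow PTpl n i j) ∧
    (∑ k ∈ Finset.Icc i j, (Nat.choose k i : ℝ) * (-1) ^ k * upPow PTmi n k j
      = -upPow PTmi n i j) := by
  obtain ⟨m, rfl⟩ : ∃ m, n = m + 1 := ⟨n - 1, by omega⟩
  refine ⟨?_, ?_, ?_, ?_⟩
  · have := low_gen (fun i k => (Nat.choose i k : ℝ) * (-1) ^ k) Ppl 1 (by
      intro i j h
      simp only [Ppl, mul_add, Finset.sum_add_distrib]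
      rw [alt_key i j h, low_diag i j h]
      ring) m i j
    simpa using this
  · have := low_gen (fun i k => (Nat.choose i k : ℝ) * (-1) ^ k) Pmi (-1) (by
      intro i j h
      simp only [Pmi, mul_sub, Finset.sum_sub_distrib]
      rw [alt_key i j h, low_diag i j h]
      ring) m i j
    simpa using this
  · have := up_gen (fun i k => (Nat.choose k i : ℝ) * (-1) ^ k) PTpl 1 (by
      intro i j h
      simp only [PTpl, mul_add, Finset.sum_add_distrib]
      rw [up_key i j h, up_diag i j h]
      ring) m i j
    simpa using this
  · have := up_gen (fun i k => (Nat.choose k i : ℝ) * (-1) ^ k) PTmi (-1) (by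
      intro i j h
      simp only [PTmi, mul_sub, Finset.sum_sub_distrib]
      rw [up_key i j h, up_diag i j h]
      ring) m i j
    simpa using this
end
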